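/- Write (ρ₁,…,ρ₁₄) = (x₁,…,x₇, l₁ξ,…,l₇ξ), where x₁,…,x₇ are the points and l₁,…,l₇ the lines of D, and let ρ̄ = (ρ₁+…+ρ₁₄)/14 be the Weyl vector. Then: (i) for s ≠ t, ⟨ρ_s,ρ_t⟩ = √2 if the corresponding nodes are joined in the diagram D and 0 otherwise; (ii) ⟨ρ̄, ρ_s⟩ = ⟨ρ̄,ρ̄⟩ = 1/(2+3√2) for every s = 1,…,14; (iii) ⟨w_P,w_P⟩ = ⟨w_L,w_L⟩ = 2 and ⟨ρ̄, w_P⟩ = ⟨ρ̄, w_Lξ⟩ = 1/√2. -/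

import Mathlib

/- Formalization over the ring ℋ of Hurwitz integers inside the real quaternions. -/

noncomputable section
open Quaternion Finset

/-- The real quaternions ℍ. -/
abbrev Quat := Quaternion ℝ

/-- The quaternion `i`. -/
def qi : Quat := ⟨0, 1, 0, 0⟩
/-- The quaternion `j`. -/
def qj : Quat := ⟨0, 0, 1, 0⟩
/-- The quaternion `k`. -/
def qk : Quat := ⟨0, 0, 0, 1⟩
/-- `p = 1 - i`. -/
def qp : Quat := 1 - qi

/-- A quaternion is a Hurwitz integer if it is `(a+bi+cj+dk)/2` with
`a,b,c,d` integers which are all congruent mod `2`. -/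
def IsHurwitz (q : Quat) : Prop :=
  ∃ a b c d : ℤ, a % 2 = b % 2 ∧ b % 2 = c % 2 ∧ c % 2 = d % 2 ∧
    q = ⟨(a : ℝ) / 2, (b : ℝ) / 2, (c : ℝ) / 2, (d : ℝ) / 2⟩

/-- A unit of the ring ℋ of Hurwitz integers. -/
def IsUnitH (q : Quat) : Prop :=
  IsHurwitz q ∧ ∃ r : Quat, IsHurwitz r ∧ q * r = 1 ∧ r * q = 1

/-- Membership in the (two-sided) ideal `pℋ`. -/
def InPH (q : Quat) : Prop := ∃ h : Quat, IsHurwitz h ∧ q = qp * h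

/-- The ambient space of the lattice `L = 3E₈ ⊕ H`: three pairs (the `E₈` summands)
together with the two coordinates of the hyperbolic cell `H`. -/
abbrev V3 : Type := (Fin 3 → Quat × Quat) × Quat × Quat

/-- The ℋ-valued form on `3E₈ ⊕ H`:  negative definite standard form on each `E₈`
summand and the hyperbolic form `⟨(x₁,x₂),(y₁,y₂)⟩ = x̄₁ p̄ y₂ + x̄₂ p y₁` on `H`. -/
def ip3 (x y : V3) : Quat :=
  (∑ s : Fin 3, (-(star (x.1 s).1 * (y.1 s).1) - star (x.1 s).2 * (y.1 s).2))
    + star x.2.1 * star qp * y.2.2 + star x.2.2 * qp * y.2.1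

/-- Membership in the `E₈` lattice: both coordinates Hurwitz and congruent mod `pℋ`. -/
def memE8 (q : Quat × Quat) : Prop := IsHurwitz q.1 ∧ IsHurwitz q.2 ∧ InPH (q.1 - q.2)

/-- Membership in the lattice `L = 3E₈ ⊕ H`. -/
def memL3 (v : V3) : Prop := (∀ s, memE8 (v.1 s)) ∧ IsHurwitz v.2.1 ∧ IsHurwitz v.2.2

/-- Right scalar multiplication on the ambient space of `3E₈ ⊕ H`. -/
def rmul3 (v : V3) (q : Quat) : V3 :=
  (fun s => ((v.1 s).1 * q, (v.1 s).2 * q), v.2.1 * q, v.2.2 * q)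

/-- The `μ`-reflection in a root `r` : `v ↦ v − r(1−μ)⟨r,v⟩/|r|²`. -/
def refl3 (r : V3) (μ : Quat) (v : V3) : V3 := v - rmul3 r ((1 - μ) * ip3 r v / ip3 r r)

/-- The root `a` of the diagram `D`. -/
def rootA : V3 := (fun _ => (0, 0), 1, -1)
/-- The roots `c_s` of the diagram `D`. -/
def rootC (s : Fin 3) : V3 := (fun t => if t = s then ((1 : Quat), (-1 : Quat)) else 0, 0, 0)
/-- The roots `e_s` of the diagram `D` (with `(1,1)` in the two other `E₈` slots). -/
def rootE (s : Fin 3) : V3 := (fun t => if t = s then (0 : Quat × Quat) else (1, 1), -qi, -1)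
/-- The root `f` of the diagram `D`. -/
def rootF : V3 := (fun _ => (0, qp), -(qi * qp), -qp)
/-- The roots `b_s` of the diagram `D`. -/
def rootB (s : Fin 3) : V3 := (fun t => if t = s then ((0 : Quat), qp) else 0, -1, 0)
/-- The roots `d_s` of the diagram `D`. -/
def rootD (s : Fin 3) : V3 := (fun t => if t = s then (-qp, (0 : Quat)) else 0, 0, 0)

/-- The set of roots of `L`. -/
def Roots3 : Set V3 := {r | memL3 r ∧ ip3 r r = -2}

/-- The reflection group `R(L)` of `L = 3E₈ ⊕ H`, as the subgroup of permutations of the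
ambient space generated by the `μ`-reflections in all roots of `L` (for all units `μ ≠ 1`). -/
def RL3 : Subgroup (Equiv.Perm V3) :=
  Subgroup.closure {g | ∃ r μ, r ∈ Roots3 ∧ IsUnitH μ ∧ μ ≠ 1 ∧ ∀ v, g v = refl3 r μ v}

/-- The seven `points` of the diagram `D`. -/
def Pt : Fin 7 → V3 := ![rootA, rootC 0, rootC 1, rootC 2, rootE 0, rootE 1, rootE 2]
/-- The seven `lines` of the diagram `D`. -/
def Ln : Fin 7 → V3 := ![rootF, rootB 0, rootB 1, rootB 2, rootD 0, rootD 1, rootD 2]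

open Classical in
/-- `w_P = l p̄ + Σ_{x incident to l} x`, computed from the line `Ln s`. -/
def wPof (s : Fin 7) : V3 :=
  rmul3 (Ln s) (star qp) + ∑ t : Fin 7, if ip3 (Pt t) (Ln s) = qp then Pt t else 0

open Classical in
/-- `w_L = x p + Σ_{l incident to x} l`, computed from the point `Pt t`. -/
def wLof (t : Fin 7) : V3 :=
  rmul3 (Pt t) qp + ∑ s : Fin 7, if ip3 (Pt t) (Ln s) = qp then Ln s else 0

/-- `ξ = (1+i)/√2`. -/
def xi : Quat := (1 + qi) * ((Real.sqrt 2 : ℝ) : Quat)⁻¹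

/-- `(ρ₁,…,ρ₁₄) = (x₁,…,x₇, l₁ξ,…,l₇ξ)`. -/
def rho : Fin 14 → V3 := fun t =>
  if h : (t : ℕ) < 7 then Pt ⟨t, h⟩ else rmul3 (Ln ⟨(t : ℕ) - 7, by omega⟩) xi

/-- The Weyl vector `ρ̄ = (ρ₁ + … + ρ₁₄)/14`. -/
def rhobar : V3 := (14 : ℝ)⁻¹ • (∑ t : Fin 14, rho t)

/-- `√2` as a quaternion. -/
def sqrt2 : Quat := ((Real.sqrt 2 : ℝ) : Quat)

/-- `w_P` (computed from the line `f`). -/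
def wP : V3 := wPof 0
/-- `w_L` (computed from the point `a`). -/
def wL : V3 := wLof 0

set_option linter.all false

/-- Incidence table: lines through each point. -/
def incT : Fin 7 → Fin 7 → Bool :=
  ![![false, true, true, true, false, false, false],
    ![true, true, false, false, true, false, false],
    ![true, false, true, false, false, true, false],
    ![true, false, false, true, false, false, true],
    ![false, true, false, false, false, true, true],
    ![false, false, true, false, true, false, true],
    ![false, false, false, true, true, true, false]]

lemma ip3_star (x y : V3) : star (ip3 x y) = ip3 y x := by
  simp only [ip3, star_add, star_sum, star_sub, star_neg, star_mul, star_star, mul_assoc]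
  abel

lemma ip3_add_right (x y z : V3) : ip3 x (y + z) = ip3 x y + ip3 x z := by
  simp only [ip3, Fin.sum_univ_three, Prod.fst_add, Prod.snd_add, Pi.add_apply, mul_add]
  abel

lemma ip3_add_left (x y z : V3) : ip3 (x + y) z = ip3 x z + ip3 y z := by
  rw [← ip3_star, ip3_add_right, star_add, ip3_star, ip3_star]

lemma ip3_zero_right (x : V3) : ip3 x 0 = 0 := by
  simp [ip3]

lemma ip3_rmul_right (x y : V3) (q : Quat) : ip3 x (rmul3 y q) = ip3 x y * q := by
  simp only [ip3, rmul3, Fin.sum_univ_three]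
  noncomm_ring

lemma ip3_rmul_left (x y : V3) (q : Quat) : ip3 (rmul3 x q) y = star q * ip3 x y := by
  rw [← ip3_star, ip3_rmul_right, star_mul, ip3_star]

lemma ip3_sum_right {ι : Type} (s : Finset ι) (x : V3) (f : ι → V3) :
    ip3 x (∑ i ∈ s, f i) = ∑ i ∈ s, ip3 x (f i) := by
  classical
  induction s using Finset.induction_on with
  | empty => simp [ip3_zero_right]
  | insert a s h ih => rw [Finset.sum_insert h, Finset.sum_insert h, ip3_add_right, ih]

lemma smul_eq_rmul3 (r : ℝ) (x : V3) : r • x = rmul3 x (r : Quat) := by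
  have h : ∀ q : Quat, r • q = q * (r : Quat) := fun q => (Quaternion.mul_coe_eq_smul r q).symm
  ext1
  · funext s
    exact Prod.ext (h _) (h _)
  · exact Prod.ext (h _) (h _)

lemma ip3_smul_left (r : ℝ) (x y : V3) : ip3 (r • x) y = r • ip3 x y := by
  rw [smul_eq_rmul3, ip3_rmul_left, Quaternion.star_coe, Quaternion.coe_mul_eq_smul]

lemma ip3_smul_right (r : ℝ) (x y : V3) : ip3 x (r • y) = r • ip3 x y := by
  rw [smul_eq_rmul3, ip3_rmul_right, Quaternion.mul_coe_eq_smul]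

lemma qi_re : (qi : Quat).re = 0 := rfl
lemma qi_imI : (qi : Quat).imI = 1 := rfl
lemma qi_imJ : (qi : Quat).imJ = 0 := rfl
lemma qi_imK : (qi : Quat).imK = 0 := rfl
lemma qp_re : (qp : Quat).re = 1 := by simp [qp, qi_re]
lemma qp_imI : (qp : Quat).imI = -1 := by simp [qp, qi_imI]
lemma qp_imJ : (qp : Quat).imJ = 0 := by simp [qp, qi_imJ]
lemma qp_imK : (qp : Quat).imK = 0 := by simp [qp, qi_imK]
lemma three_re : (3 : Quat).re = 3 := rfl
lemma three_imI : (3 : Quat).imI = 0 := rfl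
lemma three_imJ : (3 : Quat).imJ = 0 := rfl
lemma three_imK : (3 : Quat).imK = 0 := rfl
lemma two_re : (2 : Quat).re = 2 := rfl
lemma two_imI : (2 : Quat).imI = 0 := rfl
lemma two_imJ : (2 : Quat).imJ = 0 := rfl
lemma two_imK : (2 : Quat).imK = 0 := rfl

lemma qp_ne_zero : qp ≠ 0 := by
  intro h
  have := congrArg (fun q : Quat => q.re) h
  simp [qp_re] at this

set_option maxHeartbeats 4000000 in
lemma gram_pp (s t : Fin 7) : ip3 (Pt s) (Pt t) = if s = t then -2 else 0 := by
  fin_cases s <;> fin_cases t <;>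
  (simp [ip3, Pt, rootA, rootC, rootE, Fin.sum_univ_three] <;>
   (try (ext <;> simp [qi_re, qi_imI, qi_imJ, qi_imK, qp_re, qp_imI, qp_imJ, qp_imK,
      two_re, two_imI, two_imJ, two_imK,
      three_re, three_imI, three_imJ, three_imK] <;> norm_num)))

set_option maxHeartbeats 4000000 in
lemma gram_ll (s t : Fin 7) : ip3 (Ln s) (Ln t) = if s = t then -2 else 0 := by
  fin_cases s <;> fin_cases t <;>
  (simp [ip3, Ln, rootF, rootB, rootD, Fin.sum_univ_three] <;>
   (try (ext <;> simp [qi_re, qi_imI, qi_imJ, qi_imK, qp_re, qp_imI, qp_imJ, qp_imK,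
      two_re, two_imI, two_imJ, two_imK,
      three_re, three_imI, three_imJ, three_imK] <;> norm_num)))

set_option maxHeartbeats 4000000 in
lemma gram_pl (s t : Fin 7) : ip3 (Pt s) (Ln t) = if incT s t then qp else 0 := by
  fin_cases s <;> fin_cases t <;>
  (simp [ip3, Pt, Ln, incT, rootA, rootC, rootE, rootF, rootB, rootD, Fin.sum_univ_three] <;>
   (try (ext <;> simp [qi_re, qi_imI, qi_imJ, qi_imK, qp_re, qp_imI, qp_imJ, qp_imK,
      two_re, two_imI, two_imJ, two_imK,
      three_re, three_imI, three_imJ, three_imK] <;> norm_num)))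

lemma gram_lp (s t : Fin 7) : ip3 (Ln t) (Pt s) = if incT s t then star qp else 0 := by
  rw [← ip3_star, gram_pl]
  split <;> simp

lemma pl_iff (s t : Fin 7) : ip3 (Pt s) (Ln t) = qp ↔ incT s t = true := by
  rw [gram_pl]
  by_cases h : incT s t = true
  · simp [h]
  · simp [h, qp_ne_zero.symm]

lemma sqrt2_ne_zero : sqrt2 ≠ 0 := by
  simp [sqrt2, Quaternion.ext_iff]

lemma sqrt2_mul : sqrt2 * sqrt2 = 2 := by
  rw [sqrt2, ← Quaternion.coe_mul, Real.mul_self_sqrt (by norm_num)]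
  norm_cast

lemma qp_mul : qp * (1 + qi) = 2 := by
  ext <;> simp [qi_re, qi_imI, qi_imJ, qi_imK, qp_re, qp_imI, qp_imJ, qp_imK,
      two_re, two_imI, two_imJ, two_imK,
      three_re, three_imI, three_imJ, three_imK] <;> norm_num

lemma qp_mul_xi : qp * xi = sqrt2 := by
  rw [xi, ← mul_assoc, qp_mul]
  change 2 * sqrt2⁻¹ = sqrt2
  rw [← sqrt2_mul, mul_assoc, mul_inv_cancel₀ sqrt2_ne_zero, mul_one]

lemma star_sqrt2 : star sqrt2 = sqrt2 := by simp [sqrt2]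

lemma star_xi_mul : star xi * star qp = sqrt2 := by
  rw [← star_mul, qp_mul_xi, star_sqrt2]

lemma xi_eq : xi = (Real.sqrt 2)⁻¹ • (1 + qi) := by
  rw [xi, ← Quaternion.coe_inv, Quaternion.mul_coe_eq_smul]

lemma star_xi_xi : star xi * xi = 1 := by
  have h : (Real.sqrt 2)⁻¹ * (Real.sqrt 2)⁻¹ = (2 : ℝ)⁻¹ := by
    rw [← mul_inv, Real.mul_self_sqrt (by norm_num)]
  have h2 : star (1 + qi) * (1 + qi) = 2 := by
    ext <;> simp [qi_re, qi_imI, qi_imJ, qi_imK, qp_re, qp_imI, qp_imJ, qp_imK,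
      two_re, two_imI, two_imJ, two_imK,
      three_re, three_imI, three_imJ, three_imK] <;> norm_num
  rw [xi_eq, Quaternion.star_smul, smul_mul_smul_comm, h, h2]
  ext <;> simp [two_re, two_imI, two_imJ, two_imK,
      three_re, three_imI, three_imJ, three_imK]

/-- The Gram value for the sum of all rho. -/
lemma sum_rho : ∑ t : Fin 14, rho t
    = (∑ t : Fin 7, Pt t) + ∑ t : Fin 7, rmul3 (Ln t) xi := by
  rw [show (∑ t : Fin 14, rho t) = ∑ t : Fin (7 + 7), rho t from rfl, Fin.sum_univ_add]
  rfl

lemma weyl_val : (14 : ℝ)⁻¹ • (-2 + 3 * sqrt2) = ((2 + 3 * Real.sqrt 2 : ℝ) : Quat)⁻¹ := by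
  have h : (14 : ℝ)⁻¹ * (-2 + 3 * Real.sqrt 2) = (2 + 3 * Real.sqrt 2)⁻¹ := by
    have h2 : Real.sqrt 2 * Real.sqrt 2 = 2 := Real.mul_self_sqrt (by norm_num)
    have h3 : (2 + 3 * Real.sqrt 2) ≠ 0 := by positivity
    field_simp
    nlinarith
  rw [← Quaternion.coe_inv, ← h, sqrt2, Quaternion.coe_mul, Quaternion.coe_mul_eq_smul]
  push_cast
  rfl

lemma sum_ip_pt (s : Fin 7) : ip3 (Pt s) (∑ t : Fin 14, rho t) = -2 + 3 * sqrt2 := by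
  rw [sum_rho, ip3_add_right, ip3_sum_right, ip3_sum_right]
  simp only [ip3_rmul_right, gram_pp, gram_pl, ite_mul, zero_mul, qp_mul_xi]
  congr 1
  · simp
  · fin_cases s <;> simp [Fin.sum_univ_seven, incT] <;> noncomm_ring

lemma sum_ip_ln (s : Fin 7) :
    ip3 (rmul3 (Ln s) xi) (∑ t : Fin 14, rho t) = -2 + 3 * sqrt2 := by
  rw [sum_rho, ip3_add_right, ip3_sum_right, ip3_sum_right, add_comm]
  simp only [ip3_rmul_right, ip3_rmul_left, gram_lp, gram_ll, mul_ite, mul_zero, star_xi_mul]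
  congr 1
  · have h : star xi * 2 * xi = 2 := by
      have : star xi * 2 * xi = 2 * (star xi * xi) := by noncomm_ring
      rw [this, star_xi_xi, mul_one]
    simp [h]
  · fin_cases s <;> simp [Fin.sum_univ_seven, incT] <;> noncomm_ring

lemma star_val : star (-2 + 3 * sqrt2) = -2 + 3 * sqrt2 := by
  have : (-2 + 3 * sqrt2 : Quat) = ((-2 + 3 * Real.sqrt 2 : ℝ) : Quat) := by
    rw [sqrt2]; push_cast; rfl
  rw [this, Quaternion.star_coe]

lemma rhobar_pt (s : Fin 7) :
    ip3 rhobar (Pt s) = ((2 + 3 * Real.sqrt 2 : ℝ) : Quat)⁻¹ := by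
  rw [rhobar, ip3_smul_left, ← ip3_star, sum_ip_pt, star_val, weyl_val]

lemma rhobar_lnxi (s : Fin 7) :
    ip3 rhobar (rmul3 (Ln s) xi) = ((2 + 3 * Real.sqrt 2 : ℝ) : Quat)⁻¹ := by
  rw [rhobar, ip3_smul_left, ← ip3_star, sum_ip_ln, star_val, weyl_val]

lemma rhobar_rho (s : Fin 14) :
    ip3 rhobar (rho s) = ((2 + 3 * Real.sqrt 2 : ℝ) : Quat)⁻¹ := by
  unfold rho
  split
  · exact rhobar_pt _
  · exact rhobar_lnxi _

lemma rhobar_rhobar : ip3 rhobar rhobar = ((2 + 3 * Real.sqrt 2 : ℝ) : Quat)⁻¹ := by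
  conv_lhs => arg 2; rw [rhobar]
  rw [ip3_smul_right, ip3_sum_right]
  simp only [rhobar_rho, Finset.sum_const, Finset.card_univ, Fintype.card_fin]
  rw [← Nat.cast_smul_eq_nsmul ℝ, smul_smul]
  norm_num

lemma wP_eq : wP = rmul3 (Ln 0) (star qp) + (Pt 1 + Pt 2 + Pt 3) := by
  simp [wP, wPof, pl_iff, Fin.sum_univ_seven, incT]

lemma wL_eq : wL = rmul3 (Pt 0) qp + (Ln 1 + Ln 2 + Ln 3) := by
  simp [wL, wLof, pl_iff, Fin.sum_univ_seven, incT]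

lemma wP_wP : ip3 wP wP = 2 := by
  rw [wP_eq]
  simp [ip3_add_left, ip3_add_right, ip3_rmul_left, ip3_rmul_right, gram_pp, gram_ll, gram_pl,
    gram_lp, incT]
  ext <;> simp [qi_re, qi_imI, qi_imJ, qi_imK, qp_re, qp_imI, qp_imJ, qp_imK,
      two_re, two_imI, two_imJ, two_imK,
      three_re, three_imI, three_imJ, three_imK] <;> norm_num

lemma wL_wL : ip3 wL wL = 2 := by
  rw [wL_eq]
  simp [ip3_add_left, ip3_add_right, ip3_rmul_left, ip3_rmul_right, gram_pp, gram_ll, gram_pl,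
    gram_lp, incT]
  ext <;> simp [qi_re, qi_imI, qi_imJ, qi_imK, qp_re, qp_imI, qp_imJ, qp_imK,
      two_re, two_imI, two_imJ, two_imK,
      three_re, three_imI, three_imJ, three_imK] <;> norm_num

lemma xi_sqrt2 : xi * sqrt2 = star qp := by
  have h : star qp = 1 + qi := by
    ext <;> simp [qi_re, qi_imI, qi_imJ, qi_imK, qp_re, qp_imI, qp_imJ, qp_imK,
      two_re, two_imI, two_imJ, two_imK,
      three_re, three_imI, three_imJ, three_imK]
  rw [h, xi, mul_assoc]
  change (1 + qi) * (sqrt2⁻¹ * sqrt2) = _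
  rw [inv_mul_cancel₀ sqrt2_ne_zero, mul_one]

lemma final_val : ((2 + 3 * Real.sqrt 2 : ℝ) : Quat)⁻¹ * (sqrt2 + 3) = sqrt2⁻¹ := by
  have h : (2 + 3 * Real.sqrt 2)⁻¹ * (Real.sqrt 2 + 3) = (Real.sqrt 2)⁻¹ := by
    have h2 : Real.sqrt 2 * Real.sqrt 2 = 2 := Real.mul_self_sqrt (by norm_num)
    have h3 : (2 + 3 * Real.sqrt 2) ≠ 0 := by positivity
    field_simp
    nlinarith
  rw [sqrt2, ← Quaternion.coe_inv, ← Quaternion.coe_inv, ← h, Quaternion.coe_mul]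
  push_cast
  rfl

lemma rmul3_mul (x : V3) (q r : Quat) : rmul3 (rmul3 x q) r = rmul3 x (q * r) := by
  simp [rmul3, mul_assoc]

lemma rhobar_wP : ip3 rhobar wP = sqrt2⁻¹ := by
  rw [wP_eq, ← xi_sqrt2, ← rmul3_mul, ← final_val]
  simp only [ip3_add_right, ip3_rmul_right rhobar (rmul3 _ xi), rhobar_lnxi, rhobar_pt]
  noncomm_ring

lemma rhobar_wL : ip3 rhobar (rmul3 wL xi) = sqrt2⁻¹ := by
  rw [wL_eq, ← final_val]
  have h : ∀ s, ip3 rhobar (Ln s) * xi = ((2 + 3 * Real.sqrt 2 : ℝ) : Quat)⁻¹ := fun s => by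
    rw [← ip3_rmul_right, rhobar_lnxi]
  rw [ip3_rmul_right]
  simp only [ip3_add_right, add_mul, ip3_rmul_right, h, rhobar_pt, mul_assoc, qp_mul_xi]
  noncomm_ring

/-- Inner products among the special vectors:
(i) `⟨ρ_s,ρ_t⟩ = √2` for joined nodes of `D` and `0` otherwise;
(ii) `⟨ρ̄,ρ_s⟩ = ⟨ρ̄,ρ̄⟩ = 1/(2+3√2)`;
(iii) `⟨w_P,w_P⟩ = ⟨w_L,w_L⟩ = 2` and `⟨ρ̄,w_P⟩ = ⟨ρ̄,w_Lξ⟩ = 1/√2`. -/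
theorem inner_products_of_special_vectors :
    (∀ s t : Fin 7,
      (s ≠ t → ip3 (Pt s) (Pt t) = 0 ∧ ip3 (rmul3 (Ln s) xi) (rmul3 (Ln t) xi) = 0) ∧
      (ip3 (Pt s) (Ln t) = qp →
        ip3 (Pt s) (rmul3 (Ln t) xi) = sqrt2 ∧ ip3 (rmul3 (Ln t) xi) (Pt s) = sqrt2) ∧
      (ip3 (Pt s) (Ln t) = 0 →
        ip3 (Pt s) (rmul3 (Ln t) xi) = 0 ∧ ip3 (rmul3 (Ln t) xi) (Pt s) = 0)) ∧
    (∀ s : Fin 14, ip3 rhobar (rho s) = ((2 + 3 * Real.sqrt 2 : ℝ) : Quat)⁻¹) ∧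
    (ip3 rhobar rhobar = ((2 + 3 * Real.sqrt 2 : ℝ) : Quat)⁻¹) ∧
    (ip3 wP wP = 2 ∧ ip3 wL wL = 2) ∧
    (ip3 rhobar wP = sqrt2⁻¹ ∧ ip3 rhobar (rmul3 wL xi) = sqrt2⁻¹) := by
  refine ⟨fun s t => ⟨fun hst => ⟨?_, ?_⟩, fun h => ⟨?_, ?_⟩, fun h => ⟨?_, ?_⟩⟩, rhobar_rho,
    rhobar_rhobar, ⟨wP_wP, wL_wL⟩, rhobar_wP, rhobar_wL⟩
  · simp [gram_pp, hst]
  · simp [ip3_rmul_left, ip3_rmul_right, gram_ll, hst]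
  · rw [ip3_rmul_right, h, qp_mul_xi]
  · rw [ip3_rmul_left, ← ip3_star, h, star_xi_mul]
  · rw [ip3_rmul_right, h, zero_mul]
  · rw [ip3_rmul_left, ← ip3_star, h, star_zero, mul_zero]
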